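/- arXiv:2110.12699 — 3 statements merged into one kernel-verified Lean document; each statement's English description precedes it below -/
import Mathlib

section
/- Embedding of synchronous TeamLTL into ∃TeamLTL with Boolean disjunction: let φ_synch := G((o ∧ X¬o) ⩔ (¬o ∧ Xo)), a TeamLTL(⩔) formula. For every TeamLTL formula φ over AP and every nonempty team T over AP: T ⊨ₛ φ if and only if T_o ⊨∃ (φ ∧ φ_synch). -/
namespace TTS

abbrev Trace (AP : Type) := ℕ → Set AP

def IsStutTef {ι : Type} (τ : ℕ → ι → ℕ) : Prop :=
  ∀ n i, τ n i ≤ τ (n + 1) i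

def IsTef {ι : Type} (τ : ℕ → ι → ℕ) : Prop :=
  IsStutTef τ ∧ (∀ n, τ n ≠ τ (n + 1)) ∧ (∀ n i, τ (n + 1) i ≤ τ n i + 1)

def Initial {ι : Type} (τ : ℕ → ι → ℕ) : Prop := ∀ i, τ 0 i = 0

def Fair {ι : Type} (τ : ℕ → ι → ℕ) : Prop :=
  ∀ (m : ℕ) (i : ι), ∃ n, m ≤ τ n i

def Synchronous {ι : Type} (τ : ℕ → ι → ℕ) : Prop :=
  ∀ n (i j : ι), τ n i = τ n j

def shift {ι : Type} (τ : ℕ → ι → ℕ) (k : ℕ) : ℕ → ι → ℕ := fun n => τ (n + k)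

/-- TeamLTL formulas extended with Boolean disjunction ⩔, the non-emptiness
atom NE, and the universal subteam quantifier A¹. -/
inductive EFormula (AP : Type) : Type
  | atom : AP → EFormula AP
  | natom : AP → EFormula AP
  | and : EFormula AP → EFormula AP → EFormula AP
  | or : EFormula AP → EFormula AP → EFormula AP
  | bor : EFormula AP → EFormula AP → EFormula AP
  | NE : EFormula AP
  | A1 : EFormula AP → EFormula AP
  | X : EFormula AP → EFormula AP
  | U : EFormula AP → EFormula AP → EFormula AP
  | W : EFormula AP → EFormula AP → EFormula AP

def esat {AP : Type} : {ι : Type} → (ι → Trace AP) → (ℕ → ι → ℕ) → EFormula AP → Prop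
  | _, T, τ, .atom p => ∀ i, p ∈ T i (τ 0 i)
  | _, T, τ, .natom p => ∀ i, p ∉ T i (τ 0 i)
  | _, T, τ, .and φ ψ => esat T τ φ ∧ esat T τ ψ
  | ι, T, τ, .or φ ψ =>
      ∃ P : ι → Prop,
        esat (fun i : {i // P i} => T i.1) (fun n i => τ n i.1) φ ∧
        esat (fun i : {i // ¬ P i} => T i.1) (fun n i => τ n i.1) ψ
  | _, T, τ, .bor φ ψ => esat T τ φ ∨ esat T τ ψ
  | ι, _, _, .NE => Nonempty ι
  | ι, T, τ, .A1 φ =>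
      ∀ i : ι, esat (fun j : {j // j = i} => T j.1) (fun n j => τ n j.1) φ
  | _, T, τ, .X φ => esat T (shift τ 1) φ
  | _, T, τ, .U φ ψ =>
      ∃ k, esat T (shift τ k) ψ ∧ ∀ m, m < k → esat T (shift τ m) φ
  | _, T, τ, .W φ ψ =>
      ∀ k, esat T (shift τ k) φ ∨ ∃ m, m ≤ k ∧ esat T (shift τ m) ψ

def esatE {AP ι : Type} (T : ι → Trace AP) (φ : EFormula AP) : Prop :=
  ∃ τ : ℕ → ι → ℕ, IsTef τ ∧ Initial τ ∧ esat T τ φ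

def esatA {AP ι : Type} (T : ι → Trace AP) (φ : EFormula AP) : Prop :=
  ∀ τ : ℕ → ι → ℕ, IsTef τ → Initial τ → esat T τ φ

def esatS {AP ι : Type} (T : ι → Trace AP) (φ : EFormula AP) : Prop :=
  esat T (fun n _ => n) φ

/-- Plain TeamLTL formulas (negation normal form, no extended connectives). -/
inductive Formula (AP : Type) : Type
  | atom : AP → Formula AP
  | natom : AP → Formula AP
  | and : Formula AP → Formula AP → Formula AP
  | or : Formula AP → Formula AP → Formula AP
  | X : Formula AP → Formula AP
  | U : Formula AP → Formula AP → Formula AP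
  | W : Formula AP → Formula AP → Formula AP

/-- Embedding of plain TeamLTL formulas into the extended syntax. -/
def Formula.toE {AP : Type} : Formula AP → EFormula AP
  | .atom p => .atom p
  | .natom p => .natom p
  | .and φ ψ => .and φ.toE ψ.toE
  | .or φ ψ => .or φ.toE ψ.toE
  | .X φ => .X φ.toE
  | .U φ ψ => .U φ.toE ψ.toE
  | .W φ ψ => .W φ.toE ψ.toE

def sat {AP ι : Type} (T : ι → Trace AP) (τ : ℕ → ι → ℕ) (φ : Formula AP) : Prop :=
  esat T τ φ.toE

def satE {AP ι : Type} (T : ι → Trace AP) (φ : Formula AP) : Prop :=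
  ∃ τ : ℕ → ι → ℕ, IsTef τ ∧ Initial τ ∧ sat T τ φ

def satA {AP ι : Type} (T : ι → Trace AP) (φ : Formula AP) : Prop :=
  ∀ τ : ℕ → ι → ℕ, IsTef τ → Initial τ → sat T τ φ

def satS {AP ι : Type} (T : ι → Trace AP) (φ : Formula AP) : Prop :=
  sat T (fun n _ => n) φ

/-- The team T_o over AP ∪ {o}: the fresh proposition o (here: none) is added
at exactly the even positions of every trace. -/
def addO {AP ι : Type} (T : ι → Trace AP) : ι → Trace (Option AP) :=
  fun i n => {x | (∃ p, x = some p ∧ p ∈ T i n) ∨ (x = none ∧ Even n)}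

/-- Mapping a plain formula along a renaming of atomic propositions. -/
def Formula.map {AP AP' : Type} (f : AP → AP') : Formula AP → Formula AP'
  | .atom p => .atom (f p)
  | .natom p => .natom (f p)
  | .and φ ψ => .and (φ.map f) (ψ.map f)
  | .or φ ψ => .or (φ.map f) (ψ.map f)
  | .X φ => .X (φ.map f)
  | .U φ ψ => .U (φ.map f) (ψ.map f)
  | .W φ ψ => .W (φ.map f) (ψ.map f)
/-- Gφ := φ W ⊥ with ⊥ := o ∧ ¬o for the fresh proposition o := none. -/
def G' {AP : Type} (φ : EFormula (Option AP)) : EFormula (Option AP) :=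
  .W φ (.and (.atom none) (.natom none))

/-- φ_synch := G((o ∧ X¬o) ⩔ (¬o ∧ Xo)). -/
def phiSynch (AP : Type) : EFormula (Option AP) :=
  G' (.bor (.and (.atom none) (.X (.natom none)))
           (.and (.natom none) (.X (.atom none))))

theorem addO_esat {AP : Type} (φ : Formula AP) : ∀ {ι : Type} (T : ι → Trace AP) (τ : ℕ → ι → ℕ),
    esat (addO T) τ (φ.map some).toE ↔ esat T τ φ.toE := by
  induction φ with
  | atom p => intro ι T τ; simp [Formula.map, Formula.toE, esat, addO]
  | natom p => intro ι T τ; simp [Formula.map, Formula.toE, esat, addO]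
  | and φ ψ h1 h2 => intro ι T τ; simp only [Formula.map, Formula.toE, esat, h1, h2]
  | or φ ψ h1 h2 =>
    intro ι T τ
    simp only [Formula.map, Formula.toE, esat]
    exact exists_congr fun P => and_congr (h1 (fun i : {i // P i} => T i.1) _)
      (h2 (fun i : {i // ¬ P i} => T i.1) _)
  | X φ h => intro ι T τ; simp only [Formula.map, Formula.toE, esat, h]
  | U φ ψ h1 h2 => intro ι T τ; simp only [Formula.map, Formula.toE, esat, h1, h2]
  | W φ ψ h1 h2 => intro ι T τ; simp only [Formula.map, Formula.toE, esat, h1, h2]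

theorem phiSynch_iff {AP ι : Type} (hne : Nonempty ι) (T : ι → Trace AP) (τ : ℕ → ι → ℕ) :
    esat (addO T) τ (phiSynch AP) ↔
      ∀ k, (∀ i, Even (τ k i)) ∧ (∀ i, ¬ Even (τ (k + 1) i)) ∨
        (∀ i, ¬ Even (τ k i)) ∧ (∀ i, Even (τ (k + 1) i)) := by
  obtain ⟨i⟩ := hne
  simp only [phiSynch, G', esat, shift, addO, Set.mem_setOf_eq, reduceCtorEq, false_and,
    exists_false, true_and, false_or, zero_add]
  refine forall_congr' fun k => ?_
  constructor
  · rintro (h | ⟨m, -, h, h'⟩)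
    · simpa only [Nat.add_comm] using h
    · exact absurd (h i) (h' i)
  · intro h
    left
    simpa only [Nat.add_comm] using h

/-- Embedding of synchronous TeamLTL into ∃TeamLTL(⩔) via φ_synch. -/
theorem embed_sync_into_existsTeamLTL_bor (AP ι : Type) (hne : Nonempty ι)
    (T : ι → Trace AP) (φ : Formula AP) :
    satS T φ ↔ esatE (addO T) (.and (φ.map some).toE (phiSynch AP)) := by
  constructor
  · intro h
    refine ⟨fun n _ => n, ⟨fun n i => Nat.le_succ n, fun n h => ?_, fun n i => le_rfl⟩,
      fun i => rfl, (addO_esat φ T _).2 h, (phiSynch_iff hne T _).2 fun k => ?_⟩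
    · obtain ⟨i⟩ := hne
      have := congrFun h i
      simp at this
    · obtain ⟨i⟩ := hne
      by_cases hk : Even k
      · exact Or.inl ⟨fun _ => hk, fun _ => by simpa [Nat.even_add_one] using hk⟩
      · exact Or.inr ⟨fun _ => hk, fun _ => by simpa [Nat.even_add_one] using hk⟩
  · rintro ⟨τ, ⟨h1, -, h3⟩, h0, hφ, hs⟩
    rw [phiSynch_iff hne] at hs
    have : τ = fun n _ => n := by
      funext n i
      induction n with
      | zero => exact h0 i
      | succ n ih =>
        have a := h1 n i
        have b := h3 n i
        have c : τ (n + 1) i ≠ τ n i := by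
          intro e
          rcases hs n with ⟨x, y⟩ | ⟨x, y⟩
          · exact y i (e ▸ x i)
          · exact x i (e ▸ y i)
        omega
    subst this
    exact (addO_esat φ T _).1 hφ

end TTS
end

section
/- The formula F φ_off detects non-synchronicity: let o ∈ AP and φ_off := ((NE ∧ o ∧ Xo) ∨ ⊤) ⩔ ((NE ∧ ¬o ∧ X¬o) ∨ ⊤). Let T = (t_i)_{i∈ι} be a team with ι ≠ ∅ such that o ∈ t_i(n) iff n is even, for all i ∈ ι and n ∈ ℕ, and let τ be an initial tef for ι. Then (T,τ) ⊨ F φ_off if and only if τ is not synchronous. -/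
namespace TTS

/-- ⊤ := o ∨ ¬o for the fixed proposition o. -/
def topF {AP : Type} (o : AP) : EFormula AP := .or (.atom o) (.natom o)

/-- φ_off := ((NE ∧ o ∧ Xo) ∨ ⊤) ⩔ ((NE ∧ ¬o ∧ X¬o) ∨ ⊤). -/
def phiOff {AP : Type} (o : AP) : EFormula AP :=
  .bor (.or (.and .NE (.and (.atom o) (.X (.atom o)))) (topF o))
       (.or (.and .NE (.and (.natom o) (.X (.natom o)))) (topF o))

theorem esat_topF {AP : Type} (o : AP) {ι : Type} (T : ι → Trace AP) (τ : ℕ → ι → ℕ) :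
    esat T τ (topF o) := by
  simp only [topF, esat]
  exact ⟨fun i => o ∈ T i (τ 0 i), fun i => i.2, fun i => i.2⟩

theorem esat_phiOff {AP : Type} (o : AP) {ι : Type} (T : ι → Trace AP) (τ : ℕ → ι → ℕ) :
    esat T τ (phiOff o) ↔ ∃ i, (o ∈ T i (τ 0 i) ↔ o ∈ T i (τ 1 i)) := by
  simp only [phiOff, esat, shift]
  constructor
  · rintro (⟨P, ⟨⟨i⟩, h1, h2⟩, -⟩ | ⟨P, ⟨⟨i⟩, h1, h2⟩, -⟩)
    · exact ⟨i.1, iff_of_true (h1 i) (h2 i)⟩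
    · exact ⟨i.1, iff_of_false (h1 i) (h2 i)⟩
  · rintro ⟨i, hi⟩
    by_cases h : o ∈ T i (τ 0 i)
    · refine Or.inl ⟨fun j => j = i, ⟨⟨i, rfl⟩, ?_, ?_⟩, esat_topF o _ _⟩
      · rintro ⟨j, rfl⟩; exact h
      · rintro ⟨j, rfl⟩; exact hi.1 h
    · refine Or.inr ⟨fun j => j = i, ⟨⟨i, rfl⟩, ?_, ?_⟩, esat_topF o _ _⟩
      · rintro ⟨j, rfl⟩; exact h
      · rintro ⟨j, rfl⟩; exact fun h' => h (hi.2 h')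

/-- F φ_off detects non-synchronicity on teams alternating on o. -/
theorem F_phiOff_detects_nonsynchronicity (AP ι : Type) (o : AP)
    (hne : Nonempty ι) (T : ι → Trace AP)
    (halt : ∀ (i : ι) (n : ℕ), o ∈ T i n ↔ Even n)
    (τ : ℕ → ι → ℕ) (hτ : IsTef τ) (hinit : Initial τ) :
    esat T τ (.U (topF o) (phiOff o)) ↔ ¬ Synchronous τ := by
  have key : esat T τ (.U (topF o) (phiOff o)) ↔ ∃ k i, τ k i = τ (k + 1) i := by
    simp only [esat, esat_phiOff, esat_topF, halt, shift]
    simp only [implies_true, and_true]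
    refine exists_congr fun k => exists_congr fun i => ?_
    have h1 := hτ.1 k i
    have h2 := hτ.2.2 k i
    rw [Nat.zero_add, Nat.add_comm 1 k]
    constructor
    · intro h
      rw [Nat.even_iff, Nat.even_iff] at h
      omega
    · intro h
      rw [h]
  rw [key]
  constructor
  · rintro ⟨k, i, h⟩ hs
    apply hτ.2.1 k
    funext j
    rw [hs k j i, hs (k + 1) j i, h]
  · intro hs
    by_contra! hc
    apply hs
    have hn : ∀ n i, τ n i = n := by
      intro n i
      induction n with
      | zero => exact hinit i
      | succ n ih =>
        have h1 := hτ.1 n i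
        have h2 := hτ.2.2 n i
        have h3 := hc n i
        omega
    intro n i j
    rw [hn, hn]

end TTS
end

section
/- Every generalised atom is expressible in TeamLTL(⩔, NE, A¹): for every n ≥ 1, every set B ⊆ 𝒫({0,1}ⁿ) of n-ary Boolean relations, and all propositional formulas α₁,…,αₙ over AP, there exists a formula ψ of TeamLTL extended with ⩔, NE and A¹ such that for every team T = (t_i)_{i∈ι} and every tef τ for ι: (T,τ) ⊨ ψ if and only if { (⟦α₁⟧_{(t_i,τ(0)(i))}, …, ⟦αₙ⟧_{(t_i,τ(0)(i))}) : i ∈ ι } ∈ B. -/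
namespace TTS

/-- Propositional formulas over AP. -/
inductive PropForm (AP : Type) : Type
  | atom : AP → PropForm AP
  | not : PropForm AP → PropForm AP
  | and : PropForm AP → PropForm AP → PropForm AP
  | or : PropForm AP → PropForm AP → PropForm AP

/-- Classical truth value of a propositional formula in a valuation. -/
def pval {AP : Type} (v : Set AP) : PropForm AP → Prop
  | .atom p => p ∈ v
  | .not φ => ¬ pval v φ
  | .and φ ψ => pval v φ ∧ pval v ψ
  | .or φ ψ => pval v φ ∨ pval v ψ


/-- Semantic definability of a property of teams. -/
def Dfn (AP : Type) (Q : (ι : Type) → (ι → Trace AP) → (ℕ → ι → ℕ) → Prop) : Prop :=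
  ∃ ψ : EFormula AP, ∀ (ι : Type) (T : ι → Trace AP) (τ : ℕ → ι → ℕ), esat T τ ψ ↔ Q ι T τ

/-- Flat definability of a property of valuations. -/
def Flt (AP : Type) (c : Set AP → Prop) : Prop :=
  Dfn AP (fun _ T τ => ∀ i, c (T i (τ 0 i)))

theorem Flt.and {AP : Type} {c d : Set AP → Prop} (hc : Flt AP c) (hd : Flt AP d) :
    Flt AP (fun s => c s ∧ d s) := by
  obtain ⟨φ, hφ⟩ := hc
  obtain ⟨ψ, hψ⟩ := hd
  refine ⟨.and φ ψ, fun ι T τ => ?_⟩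
  simp only [esat, hφ, hψ]
  exact forall_and.symm

theorem Flt.or {AP : Type} {c d : Set AP → Prop} (hc : Flt AP c) (hd : Flt AP d) :
    Flt AP (fun s => c s ∨ d s) := by
  obtain ⟨φ, hφ⟩ := hc
  obtain ⟨ψ, hψ⟩ := hd
  refine ⟨.or φ ψ, fun ι T τ => ?_⟩
  simp only [esat, hφ, hψ]
  constructor
  · rintro ⟨P, h1, h2⟩ i
    by_cases hP : P i
    · exact Or.inl (h1 ⟨i, hP⟩)
    · exact Or.inr (h2 ⟨i, hP⟩)
  · intro h
    refine ⟨fun i => c (T i (τ 0 i)), fun i => i.2, fun i => ?_⟩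
    exact (h i.1).resolve_left i.2

theorem Flt.congr {AP : Type} {c d : Set AP → Prop} (hc : Flt AP c) (h : ∀ s, c s ↔ d s) :
    Flt AP d := by
  have : c = d := funext fun s => propext (h s)
  exact this ▸ hc

theorem Flt.atom {AP : Type} (p : AP) : Flt AP (fun s => p ∈ s) :=
  ⟨.atom p, fun ι T τ => by simp only [esat]⟩

theorem Flt.natom {AP : Type} (p : AP) : Flt AP (fun s => p ∉ s) :=
  ⟨.natom p, fun ι T τ => by simp only [esat]⟩

theorem flt_true {AP : Type} (p : AP) : Flt AP (fun _ => True) :=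
  ((Flt.atom p).or (Flt.natom p)).congr fun s => by simp [em]

theorem flt_false {AP : Type} (p : AP) : Flt AP (fun _ => False) :=
  ((Flt.atom p).and (Flt.natom p)).congr fun s => by simp

theorem flt_pval {AP : Type} (α : PropForm AP) :
    Flt AP (fun s => pval s α) ∧ Flt AP (fun s => ¬ pval s α) := by
  induction α with
  | atom p => exact ⟨Flt.atom p, Flt.natom p⟩
  | not φ ih => exact ⟨ih.2, ih.1.congr fun s => by simp [pval]⟩
  | and φ ψ h1 h2 =>
    exact ⟨h1.1.and h2.1, (h1.2.or h2.2).congr fun s => by simp only [pval]; tauto⟩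
  | or φ ψ h1 h2 =>
    exact ⟨h1.1.or h2.1, (h1.2.and h2.2).congr fun s => by simp only [pval]; tauto⟩

theorem flt_all {AP κ : Type} [Finite κ] (p : AP) (c : κ → Set AP → Prop)
    (h : ∀ k, Flt AP (c k) ∧ Flt AP (fun s => ¬ c k s)) :
    Flt AP (fun s => ∀ k, c k s) ∧ Flt AP (fun s => ¬ ∀ k, c k s) := by
  classical
  have := Fintype.ofFinite κ
  suffices H : ∀ S : Finset κ, Flt AP (fun s => ∀ k ∈ S, c k s) ∧
      Flt AP (fun s => ¬ ∀ k ∈ S, c k s) by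
    simpa using H Finset.univ
  intro S
  induction S using Finset.induction_on with
  | empty => exact ⟨(flt_true p).congr (by simp), (flt_false p).congr (by simp)⟩
  | insert a S _ ih =>
    refine ⟨((h a).1.and ih.1).congr fun s => by simp, ((h a).2.or ih.2).congr fun s => ?_⟩
    rw [Finset.forall_mem_insert]; tauto

theorem dfn_all {AP κ : Type} [Finite κ] (p : AP)
    (Q : κ → (ι : Type) → (ι → Trace AP) → (ℕ → ι → ℕ) → Prop)
    (h : ∀ k, Dfn AP (Q k)) : Dfn AP (fun ι T τ => ∀ k, Q k ι T τ) := by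
  classical
  have := Fintype.ofFinite κ
  suffices H : ∀ S : Finset κ, Dfn AP (fun ι T τ => ∀ k ∈ S, Q k ι T τ) by
    simpa using H Finset.univ
  intro S
  induction S using Finset.induction_on with
  | empty =>
    obtain ⟨ψ, hψ⟩ := flt_true p
    exact ⟨ψ, fun ι T τ => by simp [hψ]⟩
  | insert a S _ ih =>
    obtain ⟨ψ, hψ⟩ := ih
    obtain ⟨φ, hφ⟩ := h a
    exact ⟨.and φ ψ, fun ι T τ => by simp [esat, hψ, hφ]⟩

theorem dfn_ex {AP κ : Type} [Finite κ] (p : AP)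
    (Q : κ → (ι : Type) → (ι → Trace AP) → (ℕ → ι → ℕ) → Prop)
    (h : ∀ k, Dfn AP (Q k)) : Dfn AP (fun ι T τ => ∃ k, Q k ι T τ) := by
  classical
  have := Fintype.ofFinite κ
  suffices H : ∀ S : Finset κ, Dfn AP (fun ι T τ => ∃ k ∈ S, Q k ι T τ) by
    simpa using H Finset.univ
  intro S
  induction S using Finset.induction_on with
  | empty =>
    obtain ⟨ψ, hψ⟩ := flt_false p
    exact ⟨.and .NE ψ, fun ι T τ => by simp [esat, hψ]⟩
  | insert a S _ ih =>
    obtain ⟨ψ, hψ⟩ := ih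
    obtain ⟨φ, hφ⟩ := h a
    exact ⟨.bor φ ψ, fun ι T τ => by simp [esat, hψ, hφ]⟩

theorem dfn_some {AP : Type} (p : AP) {c : Set AP → Prop} (hc : Flt AP c) :
    Dfn AP (fun _ T τ => ∃ i, c (T i (τ 0 i))) := by
  obtain ⟨φ, hφ⟩ := hc
  obtain ⟨ψ, hψ⟩ := flt_true p
  refine ⟨.or (.and .NE φ) ψ, fun ι T τ => ?_⟩
  simp only [esat, hφ, hψ]
  constructor
  · rintro ⟨P, ⟨⟨i⟩, h⟩, -⟩
    exact ⟨i.1, h i⟩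
  · rintro ⟨i, hi⟩
    refine ⟨fun j => j = i, ⟨⟨⟨i, rfl⟩⟩, ?_⟩, fun _ => trivial⟩
    rintro ⟨j, rfl⟩
    exact hi

theorem exists_ap {AP : Type} (α : PropForm AP) : Nonempty AP := by
  induction α with
  | atom p => exact ⟨p⟩
  | not _ h => exact h
  | and _ _ h _ => exact h
  | or _ _ h _ => exact h

/-- Every generalised atom is expressible in TeamLTL(⩔, NE, A¹). -/
theorem generalized_atom_expressible (AP : Type) (n : ℕ) (hn : 1 ≤ n)
    (B : Set (Set (Fin n → Prop))) (α : Fin n → PropForm AP) :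
    ∃ ψ : EFormula AP,
      ∀ (ι : Type) (T : ι → Trace AP) (τ : ℕ → ι → ℕ), IsTef τ →
        (esat T τ ψ ↔
          {v : Fin n → Prop | ∃ i : ι, v = fun j => pval (T i (τ 0 i)) (α j)} ∈ B) := by
  classical
  obtain ⟨p⟩ := exists_ap (α ⟨0, hn⟩)
  have key : ∀ v : Fin n → Prop,
      Flt AP (fun s => ∀ j, (pval s (α j) ↔ v j)) ∧
      Flt AP (fun s => ¬ ∀ j, (pval s (α j) ↔ v j)) := by
    intro v
    refine flt_all p _ fun j => ?_
    by_cases hv : v j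
    · simpa [hv] using flt_pval (α j)
    · simpa [hv] using (flt_pval (α j)).symm
  have main : Dfn AP (fun ι T τ => ∃ R : B, ∀ v : Fin n → Prop,
      (v ∈ R.1 ↔ ∃ i : ι, ∀ j, (pval (T i (τ 0 i)) (α j) ↔ v j))) := by
    refine dfn_ex p _ fun R => dfn_all p _ fun v => ?_
    by_cases hv : v ∈ R.1
    · simpa only [hv, true_iff] using dfn_some p (key v).1
    · simp only [hv, false_iff, not_exists]
      exact (key v).2
  obtain ⟨ψ, hψ⟩ := main
  refine ⟨ψ, fun ι T τ _ => ?_⟩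
  rw [hψ]
  have e : ∀ v : Fin n → Prop, (∃ i : ι, v = fun j => pval (T i (τ 0 i)) (α j)) ↔
      ∃ i : ι, ∀ j, (pval (T i (τ 0 i)) (α j) ↔ v j) := by
    intro v
    refine exists_congr fun i => ?_
    rw [funext_iff]
    exact forall_congr' fun j => by rw [eq_comm, eq_iff_iff]
  constructor
  · rintro ⟨R, hR⟩
    have : {v : Fin n → Prop | ∃ i : ι, v = fun j => pval (T i (τ 0 i)) (α j)} = R.1 := by
      ext v
      rw [Set.mem_ofPred_eq, e, hR]
    rw [this]
    exact R.2
  · intro h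
    exact ⟨⟨_, h⟩, e⟩

end TTS
end
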